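/- For all integers M, N the rational function P(M,N) satisfies the recurrence relations: if M ≥ 2 is even and N ≥ 1, then P(M,N) = P(M,N−1) + q^N · P(M−1,N); and if M ≥ 1 is odd and N ≥ 2, then P(M,N) = P(M,N−1) + q^N · P(M−1,N) + q^{M+N} · P(M+1,N−2). -/

import Mathlib

open scoped BigOperators

noncomputable section

/-- The field ℚ(q). -/
abbrev K : Type := RatFunc ℚ

/-- The variable q. -/
def qq : K := RatFunc.X

/-- The quantum integer [n] = 1 + q + ⋯ + q^{n-1}. -/
def qint (n : ℕ) : K := ∑ i ∈ Finset.range n, qq ^ i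

/-- The quantum factorial [n]! = [1][2]⋯[n]. -/
def qfact (n : ℕ) : K := ∏ i ∈ Finset.range n, qint (i + 1)

/-- The Gaussian binomial coefficient [n choose k] = [n]!/([k]!·[n-k]!),
with the convention that it is 0 when k > n. -/
def qbinom (n k : ℕ) : K :=
  if k ≤ n then qfact n / (qfact k * qfact (n - k)) else 0

/-- a_{(2m-1,N)} = [N+2m]/[2m] and a_{(2m,N)} = [2N+2m]/[N+2m]:
for odd j = 2m-1 this is [N+j+1]/[j+1], for even j = 2m this is [2N+j]/[N+j]. -/
def aB (j N : ℕ) : K :=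
  if Odd j then qint (N + j + 1) / qint (j + 1) else qint (2 * N + j) / qint (N + j)

/-- P(M,N) = ∏_{i=1}^{N}(1+q^i) · ∏_{j=1}^{M} a_{(j,N)}. -/
def P (M N : ℕ) : K :=
  (∏ i ∈ Finset.range N, (1 + qq ^ (i + 1))) * ∏ j ∈ Finset.range M, aB (j + 1) N

/-!
Everything rests on the rule `[a + b] = [a] + q ^ a [b]`. For even `M` the products telescope to
`P(M, N + 1) [N + 1] = P(M, N) [2N + M + 2]`. Hence in the even recurrence the two terms on the
right are the fractions `[N] / [2N + M]` and `q ^ N [N + M] / [2N + M]` of `P(M, N)`, which add up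
to `1`. In the odd recurrence, multiplying by `[M + 1]` turns every term into a multiple of
`P(M - 1, N)` or `P(M - 1, N - 1)`, and two further applications of the rule make both sides agree.
-/

lemma qint_ne_zero {n : ℕ} (hn : n ≠ 0) : qint n ≠ 0 := by
  have h_eq : qint n = algebraMap (Polynomial ℚ) K (∑ i ∈ Finset.range n, Polynomial.X ^ i) := by
    simp only [qint, qq, map_sum, map_pow, RatFunc.algebraMap_X]
  rw [h_eq]
  exact RatFunc.algebraMap_ne_zero (Polynomial.monic_geom_sum_X hn).ne_zero

lemma qint_add (a b : ℕ) : qint (a + b) = qint a + qq ^ a * qint b := by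
  simp only [qint, Finset.sum_range_add, pow_add, Finset.mul_sum]

lemma P_succ (M N : ℕ) : P (M + 1) N = P M N * aB (M + 1) N := by
  rw [P, P, Finset.prod_range_succ, mul_assoc]

lemma P_zero_succ_mul_qint (N : ℕ) :
    P 0 (N + 1) * qint (N + 1) = P 0 N * qint (2 * N + 2) := by
  have h_double : qint (2 * N + 2) = qint (N + 1) + qq ^ (N + 1) * qint (N + 1) := by
    rw [← qint_add]
    congr 1
    ring
  rw [h_double]
  simp only [P, Finset.prod_range_succ, Finset.prod_range_zero]
  ring

section

variable {M : ℕ}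

lemma P_succ_mul_qint_of_even (hM : Even M) (N : ℕ) :
    P (M + 1) N * qint (M + 2) = P M N * qint (N + M + 2) := by
  rw [P_succ, aB, if_pos hM.add_one, mul_assoc, div_mul_cancel₀ _ (qint_ne_zero (by lia)),
    ← add_assoc]

lemma P_succ_mul_qint_of_odd (hM : Odd M) (N : ℕ) :
    P (M + 1) N * qint (N + M + 1) = P M N * qint (2 * N + M + 1) := by
  rw [P_succ, aB, if_neg (Nat.not_odd_iff_even.mpr hM.add_one), mul_assoc, ← add_assoc,
    ← add_assoc, div_mul_cancel₀ _ (qint_ne_zero (by lia))]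

lemma P_add_two_mul_qint_of_even (hM : Even M) (N : ℕ) :
    P (M + 2) N * qint (M + 2) = P M N * qint (2 * N + M + 2) := by
  have h_even := P_succ_mul_qint_of_even hM N
  have h_odd : P (M + 2) N * qint (N + M + 2) = P (M + 1) N * qint (2 * N + M + 2) :=
    P_succ_mul_qint_of_odd hM.add_one N
  apply mul_right_cancel₀ (qint_ne_zero (n := N + M + 2) (by lia))
  linear_combination qint (M + 2) * h_odd + qint (2 * N + M + 2) * h_even

lemma P_succ_right_mul_qint_of_even (hM : Even M) (N : ℕ) :
    P M (N + 1) * qint (N + 1) = P M N * qint (2 * N + M + 2) := by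
  obtain ⟨m, rfl⟩ := even_iff_exists_two_mul.mp hM
  clear hM
  induction m with
  | zero => exact P_zero_succ_mul_qint N
  | succ m ih =>
    have h_even : Even (2 * m) := even_two_mul m
    have h_N := P_add_two_mul_qint_of_even h_even N
    have h_succ : P (2 * m + 2) (N + 1) * qint (2 * m + 2)
        = P (2 * m) (N + 1) * qint (2 * N + (2 * m + 2) + 2) := by
      convert P_add_two_mul_qint_of_even h_even (N + 1) using 3
      ring
    rw [mul_add_one]
    apply mul_right_cancel₀ (qint_ne_zero (n := 2 * m + 2) (by lia))
    linear_combination qint (N + 1) * h_succ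
      + qint (2 * N + (2 * m + 2) + 2) * (ih - h_N)

lemma P_succ_succ_of_odd (hM : Odd M) (N : ℕ) :
    P (M + 1) (N + 1) = P (M + 1) N + qq ^ (N + 1) * P M (N + 1) := by
  have h_right : P (M + 1) (N + 1) * qint (N + 1) = P (M + 1) N * qint (2 * (N + 1) + M + 1) := by
    convert P_succ_right_mul_qint_of_even hM.add_one N using 3
    ring
  have h_left := P_succ_mul_qint_of_odd hM (N + 1)
  have h_split : qint (2 * (N + 1) + M + 1)
      = qint (N + 1) + qq ^ (N + 1) * qint (N + 1 + M + 1) := by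
    rw [← qint_add]
    congr 1
    ring
  apply mul_right_cancel₀ (qint_ne_zero (n := 2 * (N + 1) + M + 1) (by lia))
  linear_combination h_right + qq ^ (N + 1) * h_left + P (M + 1) (N + 1) * h_split

lemma P_add_two_mul_qint_eq_P_succ_right_mul_qint (hM : Even M) (N : ℕ) :
    P (M + 2) N * qint (M + 2) = P M (N + 1) * qint (N + 1) := by
  rw [P_add_two_mul_qint_of_even hM, P_succ_right_mul_qint_of_even hM]

lemma P_succ_add_two_of_even (hM : Even M) (N : ℕ) :
    P (M + 1) (N + 2) = P (M + 1) (N + 1) + qq ^ (N + 2) * P M (N + 2)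
      + qq ^ (M + 1 + (N + 2)) * P (M + 2) N := by
  have h_lhs := P_succ_mul_qint_of_even hM (N + 2)
  have h_first := P_succ_mul_qint_of_even hM (N + 1)
  have h_third := P_add_two_mul_qint_eq_P_succ_right_mul_qint hM N
  have h_right := P_succ_right_mul_qint_of_even hM (N + 1)
  have h_split_lhs : qint (N + 2 + M + 2) = qint (N + 2) + qq ^ (N + 2) * qint (M + 2) := by
    rw [← qint_add, ← add_assoc]
  have h_split_right : qint (2 * (N + 1) + M + 2)
      = qint (N + 1 + M + 2) + qq ^ (M + 1 + (N + 2)) * qint (N + 1) := by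
    rw [show M + 1 + (N + 2) = N + 1 + M + 2 by ring, ← qint_add]
    congr 1
    ring
  apply mul_right_cancel₀ (qint_ne_zero (n := M + 2) (by lia))
  linear_combination h_lhs - h_first - qq ^ (M + 1 + (N + 2)) * h_third + h_right
    + P M (N + 2) * h_split_lhs + P M (N + 1) * h_split_right

end

theorem stmt_3 (M N : ℕ) :
    (Even M → 2 ≤ M → 1 ≤ N →
      P M N = P M (N - 1) + qq ^ N * P (M - 1) N) ∧
    (Odd M → 1 ≤ M → 2 ≤ N →
      P M N = P M (N - 1) + qq ^ N * P (M - 1) N + qq ^ (M + N) * P (M + 1) (N - 2)) := by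
  constructor
  · intro hM hM_two hN
    obtain ⟨m, rfl⟩ := Nat.exists_eq_add_of_le' (one_le_two.trans hM_two)
    obtain ⟨n, rfl⟩ := Nat.exists_eq_add_of_le' hN
    exact P_succ_succ_of_odd (by grind) n
  · intro hM hM_one hN
    obtain ⟨m, rfl⟩ := Nat.exists_eq_add_of_le' hM_one
    obtain ⟨n, rfl⟩ := Nat.exists_eq_add_of_le' hN
    exact P_succ_add_two_of_even (by grind) n
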